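/- Let R be a commutative ring, S a multiplicative subset of R, 0 → A → B → C → 0 an S-exact sequence of R-modules and n ≥ 0 an integer. If Ext^{n+1}_R(A, N) and Ext^{n+1}_R(B, N) are uniformly S-torsion for every R-module N, then Ext^{n+2}_R(C, N) is uniformly S-torsion for every R-module N. (That is, the S-projective dimension of C is at most 1 + max{S-pd_R(A), S-pd_R(B)}.) -/

import Mathlib

open CategoryTheory

universe u

/-- A module is uniformly `S`-torsion if a single `s ∈ S` kills it. -/
def UnifSTorsion {R : Type u} [CommRing R] (S : Submonoid R) (M : Type*) [Zero M] [SMul R M] :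
    Prop :=
  ∃ s ∈ S, ∀ m : M, s • m = (0 : M)

/-- The sequence `X --u--> Y --v--> Z` is `S`-exact at `Y`. -/
def SExactAt {R : Type u} [CommRing R] (S : Submonoid R) {X Y Z : Type*}
    [Zero Y] [SMul R Y] [Zero Z] (u : X → Y) (v : Y → Z) : Prop :=
  ∃ s ∈ S, (∀ y : Y, v y = 0 → ∃ x : X, s • y = u x) ∧ ∀ x : X, v (s • u x) = 0

/-!
Multiplication by `s` on an object factoring through another one passes uniform `S`-torsion of
`Ext(-, N)` from the second object to the first. For an `S`-exact sequence, this relates `A` to the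
kernel of `g` and the coimage of `g` to `C`, so the long exact sequence of
`0 ⟶ ker g ⟶ B ⟶ coim g ⟶ 0` bounds `Ext^{n+2}(C, N)` in terms of `Ext^{n+1}(A, N)` and
`Ext^{n+2}(B, N)`. The latter is controlled by `Ext^{n+1}(B, -)` by shifting `N` along an embedding
into an injective. As the long exact sequence is available for Yoneda `Ext`, the derived functor
`Ext` is first identified with it.
-/

universe w v

section Torsion

variable {R : Type u} [CommRing R] (S : Submonoid R)

lemma unifSTorsion_congr {M N : Type*} [AddCommGroup M] [Module R M] [AddCommGroup N] [Module R N]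
    (e : M ≃ₗ[R] N) : UnifSTorsion S M ↔ UnifSTorsion S N := by
  simp only [UnifSTorsion, e.surjective.forall, ← map_smul, e.map_eq_zero_iff]

end Torsion

section Comparison

variable {R : Type*} [Ring R] {𝒜 : Type*} [Category.{v} 𝒜] [Abelian 𝒜] [Linear R 𝒜]
  [HasExt.{w} 𝒜] {X : 𝒜} (P : ProjectiveResolution X) (Y : 𝒜) (n : ℕ)

/-- The linear equivalence between the homology of a short complex `T` of modules and a quotient of
the cycles of `T` by the boundaries, given as a surjection `φ` whose kernel is the boundaries. -/
noncomputable def homologyLinearEquivOfSurjective (T : ShortComplex (ModuleCat.{v} R))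
    {M : Type*} [AddCommGroup M] [Module R M] (φ : LinearMap.ker T.g.hom →ₗ[R] M)
    (hφ : Function.Surjective φ) (hker : LinearMap.range T.moduleCatToCycles = LinearMap.ker φ) :
    T.homology ≃ₗ[R] M :=
  T.moduleCatHomologyIso.toLinearEquiv ≪≫ₗ Submodule.quotEquivOfEq _ _ hker ≪≫ₗ
    φ.quotKerEquivOfSurjective hφ

variable {Y n} in
lemma smul_extMk (r : R) (φ : P.complex.X n ⟶ Y) (m : ℕ) (hm : n + 1 = m)
    (hφ : P.complex.d m n ≫ φ = 0) :
    r • P.extMk φ m hm hφ = P.extMk (r • φ) m hm (by rw [Linear.comp_smul, hφ, smul_zero]) := by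
  simp only [Abelian.Ext.smul_eq_comp_mk₀, P.extMk_comp_mk₀, Linear.comp_smul, Category.comp_id]

/-- The linear map sending a cocycle of `Hom(P, Y)` to its class in the Yoneda `Ext` module. -/
noncomputable def extMkLinearMap :
    LinearMap.ker ((P.complex.linearYonedaObj R Y).sc' n (n + 1) (n + 2)).g.hom →ₗ[R]
      Abelian.Ext X Y (n + 1) where
  toFun φ := P.extMk φ.1 (n + 2) rfl φ.2
  map_add' _ _ := (P.add_extMk _ _ _ _ _ _).symm
  map_smul' r φ := (smul_extMk P (Y := Y) r φ.1 (n + 2) rfl φ.2).symm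

lemma extMkLinearMap_surjective :
    Function.Surjective (extMkLinearMap (R := R) P Y n) := fun e ↦ by
  obtain ⟨φ, hφ, rfl⟩ := P.extMk_surjective e (n + 2) rfl
  exact ⟨⟨φ, hφ⟩, rfl⟩

lemma range_moduleCatToCycles_eq_ker_extMkLinearMap :
    LinearMap.range ((P.complex.linearYonedaObj R Y).sc' n (n + 1) (n + 2)).moduleCatToCycles =
      LinearMap.ker (extMkLinearMap P Y n) := by
  ext φ
  exact (exists_congr fun _ ↦ Subtype.ext_iff).trans
    (P.extMk_eq_zero_iff φ.1 (n + 2) rfl φ.2 n rfl).symm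

/-- In positive degrees, `Ext` defined as a derived functor agrees with Yoneda `Ext`. -/
noncomputable def extLinearEquivAbelianExt [EnoughProjectives 𝒜] (X Y : 𝒜) (n : ℕ) :
    ((Ext R 𝒜 (n + 1)).obj (Opposite.op X)).obj Y ≃ₗ[R] Abelian.Ext X Y (n + 1) :=
  let P := projectiveResolution X
  (P.isoExt (n + 1) Y ≪≫ ShortComplex.homologyMapIso
    ((P.complex.linearYonedaObj R Y).isoSc' n (n + 1) (n + 2) (by simp) (by simp))).toLinearEquiv
    ≪≫ₗ homologyLinearEquivOfSurjective _ (extMkLinearMap P Y n)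
      (extMkLinearMap_surjective P Y n) (range_moduleCatToCycles_eq_ker_extMkLinearMap P Y n)

end Comparison

section LinearAbelian

open Limits Abelian

variable {R : Type u} [CommRing R] {S : Submonoid R}
  {𝒜 : Type*} [Category.{v} 𝒜] [Abelian 𝒜] [Linear R 𝒜]

section YonedaExt

variable [HasExt.{w} 𝒜] {X Y N : 𝒜} {n : ℕ}

lemma UnifSTorsion.ext_of_comp_eq_smul_id (h : UnifSTorsion S (Abelian.Ext Y N n)) {s : R}
    (hs : s ∈ S) {a : X ⟶ Y} {b : Y ⟶ X} (hab : a ≫ b = s • 𝟙 X) :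
    UnifSTorsion S (Abelian.Ext X N n) := by
  obtain ⟨t, ht, h⟩ := h
  refine ⟨t * s, S.mul_mem ht hs, fun e ↦ ?_⟩
  have hse : s • e = (Ext.mk₀ a).comp ((Ext.mk₀ b).comp e (zero_add n)) (zero_add n) := by
    rw [Ext.mk₀_comp_mk₀_assoc, hab, Ext.mk₀_smul, Ext.smul_comp, Ext.mk₀_id_comp]
  rw [mul_smul, hse, ← Ext.comp_smul, h, Ext.comp_zero]

lemma UnifSTorsion.ext_succ [EnoughInjectives 𝒜]
    (h : ∀ N : 𝒜, UnifSTorsion S (Abelian.Ext X N n)) (N : 𝒜) :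
    UnifSTorsion S (Abelian.Ext X N (n + 1)) := by
  obtain ⟨I⟩ := EnoughInjectives.presentation N
  obtain ⟨s, hs, h⟩ := h I.shortComplex.X₃
  refine ⟨s, hs, fun e ↦ ?_⟩
  obtain ⟨e', rfl⟩ := Ext.covariant_sequence_exact₁ X I.shortExact_shortComplex e
    (Ext.eq_zero_of_injective _) rfl
  rw [← Ext.smul_comp, h, Ext.zero_comp]

lemma UnifSTorsion.ext_X₃ {T : ShortComplex 𝒜} (hT : T.ShortExact)
    (h₁ : UnifSTorsion S (Abelian.Ext T.X₁ N n))
    (h₂ : UnifSTorsion S (Abelian.Ext T.X₂ N (n + 1))) :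
    UnifSTorsion S (Abelian.Ext T.X₃ N (n + 1)) := by
  obtain ⟨s, hs, h₁⟩ := h₁
  obtain ⟨t, ht, h₂⟩ := h₂
  refine ⟨s * t, S.mul_mem hs ht, fun e ↦ ?_⟩
  obtain ⟨e', he'⟩ := Ext.contravariant_sequence_exact₃ hT N (t • e)
    (by rw [Ext.comp_smul, h₂]) (add_comm 1 n)
  rw [mul_smul, ← he', ← Ext.comp_smul, h₁, Ext.comp_zero]

end YonedaExt

variable {A B C X : 𝒜} {f : A ⟶ B} {g : B ⟶ C}

lemma exists_comp_factorThruImage_eq_smul_id {s : R} (hs : s • kernel.ι f = 0) :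
    ∃ b : Abelian.image f ⟶ A, b ≫ Abelian.factorThruImage f = s • 𝟙 (Abelian.image f) := by
  let e := Abelian.factorThruImage f
  have he : kernel.ι e ≫ f = 0 := calc
    kernel.ι e ≫ f = kernel.ι e ≫ e ≫ Abelian.image.ι f :=
      (kernel.ι e ≫= Abelian.image.fac f).symm
    _ = 0 := by rw [kernel.condition_assoc, zero_comp]
  have hse : s • kernel.ι e = 0 := by
    rw [← kernel.lift_ι f _ he, ← Linear.comp_smul, hs, comp_zero]
  refine ⟨Abelian.epiDesc e (s • 𝟙 A) (by rwa [Linear.comp_smul, Category.comp_id]), ?_⟩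
  rw [← cancel_epi e, Abelian.comp_epiDesc_assoc, Linear.smul_comp, Linear.comp_smul,
    Category.id_comp, Category.comp_id]

lemma exists_comp_factorThruCoimage_eq_smul_id {s : R} (hs : s • cokernel.π g = 0) :
    ∃ a : C ⟶ Abelian.coimage g, a ≫ Abelian.factorThruCoimage g = s • 𝟙 C := by
  let m := Abelian.factorThruCoimage g
  have hm : g ≫ cokernel.π m = 0 := calc
    g ≫ cokernel.π m = (Abelian.coimage.π g ≫ m) ≫ cokernel.π m :=
      (Abelian.coimage.fac g =≫ cokernel.π m).symm
    _ = 0 := by rw [Category.assoc, cokernel.condition, comp_zero]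
  have hsm : s • cokernel.π m = 0 := by
    rw [← cokernel.π_desc g _ hm, ← Linear.smul_comp, hs, zero_comp]
  exact ⟨Abelian.monoLift m (s • 𝟙 C) (by rwa [Linear.smul_comp, Category.id_comp]),
    Abelian.monoLift_comp _ _ _⟩

lemma exists_comp_eq_smul {s t : R} (ht : t • kernel.ι f = 0) (p : X ⟶ B)
    (hs : s • (p ≫ cokernel.π f) = 0) : ∃ a : X ⟶ A, a ≫ f = (t * s) • p := by
  obtain ⟨b, hb⟩ := exists_comp_factorThruImage_eq_smul_id ht
  let k : X ⟶ Abelian.image f := kernel.lift _ (s • p) (by rw [Linear.smul_comp, hs])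
  have hk : k ≫ Abelian.image.ι f = s • p := kernel.lift_ι _ _ _
  exact ⟨k ≫ b, calc
    (k ≫ b) ≫ f = k ≫ (b ≫ Abelian.factorThruImage f) ≫ Abelian.image.ι f := by simp
    _ = t • k ≫ Abelian.image.ι f := by
      rw [hb, Linear.smul_comp, Linear.comp_smul, Category.id_comp]
    _ = (t * s) • p := by rw [hk, mul_smul]⟩

/-- `S`-exactness of `0 ⟶ A ⟶ B ⟶ C ⟶ 0` in an `R`-linear abelian category. Since `B` has no
elements, the inclusion `s • ker g ⊆ im f` is encoded as the vanishing of `s` times the composite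
`ker g ⟶ B ⟶ coker f`. -/
structure SShortExact (S : Submonoid R) (f : A ⟶ B) (g : B ⟶ C) : Prop where
  kernel_ι : ∃ s ∈ S, s • kernel.ι f = 0
  comp : ∃ s ∈ S, s • (f ≫ g) = 0
  kernel_ι_comp_cokernel_π : ∃ s ∈ S, s • (kernel.ι g ≫ cokernel.π f) = 0
  cokernel_π : ∃ s ∈ S, s • cokernel.π g = 0

namespace SShortExact

lemma exists_kernel_comp_eq_smul_id (h : SShortExact S f g) :
    ∃ s ∈ S, ∃ (a : kernel g ⟶ A) (b : A ⟶ kernel g), a ≫ b = s • 𝟙 (kernel g) := by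
  obtain ⟨t, ht, hf⟩ := h.kernel_ι
  obtain ⟨r, hr, hfg⟩ := h.comp
  obtain ⟨s, hs, hgf⟩ := h.kernel_ι_comp_cokernel_π
  obtain ⟨a, ha⟩ := exists_comp_eq_smul hf (kernel.ι g) hgf
  refine ⟨r * (t * s), S.mul_mem hr (S.mul_mem ht hs), a,
    kernel.lift g (r • f) (by rw [Linear.smul_comp, hfg]), ?_⟩
  rw [← cancel_mono (kernel.ι g), Category.assoc, kernel.lift_ι, Linear.comp_smul, ha, smul_smul,
    Linear.smul_comp, Category.id_comp]

lemma exists_coimage_comp_eq_smul_id (h : SShortExact S f g) :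
    ∃ s ∈ S, ∃ (a : C ⟶ Abelian.coimage g) (b : Abelian.coimage g ⟶ C), a ≫ b = s • 𝟙 C := by
  obtain ⟨s, hs, hg⟩ := h.cokernel_π
  obtain ⟨a, ha⟩ := exists_comp_factorThruCoimage_eq_smul_id hg
  exact ⟨s, hs, a, _, ha⟩

end SShortExact

theorem stmt11_general [HasExt.{w} 𝒜] (h : SShortExact S f g) {N : 𝒜} {n : ℕ}
    (hA : UnifSTorsion S (Abelian.Ext A N n)) (hB : UnifSTorsion S (Abelian.Ext B N (n + 1))) :
    UnifSTorsion S (Abelian.Ext C N (n + 1)) := by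
  obtain ⟨s, hs, _, _, hK⟩ := h.exists_kernel_comp_eq_smul_id
  obtain ⟨t, ht, _, _, hI⟩ := h.exists_coimage_comp_eq_smul_id
  let T := ShortComplex.mk _ _ (cokernel.condition (kernel.ι g))
  have hT : T.ShortExact := { exact := ShortComplex.exact_cokernel _ }
  exact (UnifSTorsion.ext_X₃ hT (hA.ext_of_comp_eq_smul_id hs hK) hB).ext_of_comp_eq_smul_id ht hI

end LinearAbelian

section Modules

variable {R : Type u} [CommRing R] {S : Submonoid R}

lemma unifSTorsion_ext_iff {𝒜 : Type*} [Category.{v} 𝒜] [Abelian 𝒜] [Linear R 𝒜]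
    [EnoughProjectives 𝒜] [HasExt.{w} 𝒜] (X N : 𝒜) (n : ℕ) :
    UnifSTorsion S (((Ext R 𝒜 (n + 1)).obj (Opposite.op X)).obj N) ↔
      UnifSTorsion S (Abelian.Ext X N (n + 1)) :=
  unifSTorsion_congr S (extLinearEquivAbelianExt X N n)

lemma SShortExact.of_sExactAt {A B C : ModuleCat.{v} R} {f : A ⟶ B} {g : B ⟶ C}
    (hA : ∃ s ∈ S, ∀ x : A, f x = 0 → s • x = 0) (hB : SExactAt S f g)
    (hC : ∃ s ∈ S, ∀ c : C, ∃ b : B, s • c = g b) : SShortExact S f g := by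
  obtain ⟨t, ht, hA⟩ := hA
  obtain ⟨s, hs, hgf, hfg⟩ := hB
  obtain ⟨r, hr, hC⟩ := hC
  refine ⟨⟨t, ht, ?_⟩, ⟨s, hs, ?_⟩, ⟨s, hs, ?_⟩, ⟨r, hr, ?_⟩⟩
  · ext x
    exact hA _ (Limits.kernel.condition_apply f x)
  · ext x
    exact (map_smul g.hom s (f x)).symm.trans (hfg x)
  · ext y
    obtain ⟨x, hx⟩ := hgf _ (Limits.kernel.condition_apply g y)
    calc s • Limits.cokernel.π f (Limits.kernel.ι g y)
        = Limits.cokernel.π f (f x) := by rw [← map_smul, hx]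
      _ = 0 := Limits.cokernel.condition_apply f x
  · ext c
    obtain ⟨b, hb⟩ := hC c
    calc r • Limits.cokernel.π g c = Limits.cokernel.π g (g b) := by rw [← map_smul, hb]
      _ = 0 := Limits.cokernel.condition_apply g b

end Modules

/-- Given an `S`-exact sequence `0 → A → B → C → 0`, if `Ext^{n+1}(A, N)` and
`Ext^{n+1}(B, N)` are uniformly `S`-torsion for all `N`, then `Ext^{n+2}(C, N)` is
uniformly `S`-torsion for all `N` (so `S`-pd C ≤ 1 + max{`S`-pd A, `S`-pd B}). -/
theorem stmt11 {R : Type u} [CommRing R] (S : Submonoid R)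
    {A B C : ModuleCat.{u} R} (f : A ⟶ B) (g : B ⟶ C)
    (hA : ∃ s ∈ S, ∀ x : A, f x = 0 → s • x = (0 : A))
    (hB : SExactAt S (⇑f) (⇑g))
    (hC : ∃ s ∈ S, ∀ c : C, ∃ b : B, s • c = g b)
    (n : ℕ)
    (hApd : ∀ N : ModuleCat.{u} R,
      UnifSTorsion S (((Ext R (ModuleCat.{u} R) (n + 1)).obj (Opposite.op A)).obj N))
    (hBpd : ∀ N : ModuleCat.{u} R,
      UnifSTorsion S (((Ext R (ModuleCat.{u} R) (n + 1)).obj (Opposite.op B)).obj N)) :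
    ∀ N : ModuleCat.{u} R,
      UnifSTorsion S (((Ext R (ModuleCat.{u} R) (n + 2)).obj (Opposite.op C)).obj N) := by
  simp only [unifSTorsion_ext_iff] at hApd hBpd ⊢
  exact fun N ↦ stmt11_general (.of_sExactAt hA hB hC) (hApd N) (.ext_succ hBpd N)
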